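/- arXiv:2503.18920 — 2 statements merged into one kernel-verified Lean document; each statement's English description precedes it below -/
import Mathlib

section
/- A surjective function f : V(C_n) → {1,...,k} is a k-color weak maximizer of the Wiener index W on C_n if and only if for every i ∈ {1,...,k} the color class f⁻¹(i) is a maximizer of W on C_n. -/
open SimpleGraph Finset

/-- The cycle graph on vertex set `ZMod n`, with an edge between `i` and `i+1` (mod `n`). -/
def cycleGraphZMod (n : ℕ) : SimpleGraph (ZMod n) :=
  SimpleGraph.fromRel (fun u v => v = u + 1)

/-- The Wiener index of a set of vertices: the sum of all pairwise geodesic distances. -/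
noncomputable def wienerSet {V : Type*} [Fintype V] [DecidableEq V]
    (G : SimpleGraph V) (A : Finset V) : ℕ :=
  (∑ p ∈ A.offDiag, G.dist p.1 p.2) / 2

/-- `A` is a maximizer of `W` on `G`. -/
def IsWienerMaximizer {V : Type*} [Fintype V] [DecidableEq V]
    (G : SimpleGraph V) (A : Finset V) : Prop :=
  ∀ B : Finset V, B.card = A.card → wienerSet G B ≤ wienerSet G A

/-- `A ⊆ V(C_n)` is almost good. -/
def AlmostGood (n : ℕ) (A : Finset (ZMod n)) : Prop :=
  A.card = 1 ∨ A.card = n - 1 ∨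
    ∃ c₁ c₂ : ((cycleGraphZMod n).induce (↑A : Set (ZMod n))).ConnectedComponent,
      c₁ ≠ c₂ ∧ (∀ c, c = c₁ ∨ c = c₂) ∧
      (c₁.supp.ncard : ℤ) - (c₂.supp.ncard : ℤ) ≤ 1 ∧
      (c₂.supp.ncard : ℤ) - (c₁.supp.ncard : ℤ) ≤ 1

/-- `A ⊆ V(C_n)` is good: both `A` and its complement are almost good. -/
def GoodSet (n : ℕ) [NeZero n] (A : Finset (ZMod n)) : Prop :=
  AlmostGood n A ∧ AlmostGood n (Finset.univ \ A)

/-- The color class of color `i` for the coloring `f`. -/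
def colorClass {V : Type*} [Fintype V] {k : ℕ} (f : V → Fin k) (i : Fin k) : Finset V :=
  Finset.univ.filter (fun v => f v = i)

/-- The Wiener index of a coloring: the sum of the Wiener indices of its color classes. -/
noncomputable def wienerColoring {V : Type*} [Fintype V] [DecidableEq V] {k : ℕ}
    (G : SimpleGraph V) (f : V → Fin k) : ℕ :=
  ∑ i : Fin k, wienerSet G (colorClass f i)

/-- The type of a coloring, as the multiset of cardinalities of its color classes
(equality of multisets is equality of the nondecreasing rearrangements). -/
def colorType {V : Type*} [Fintype V] {k : ℕ} (f : V → Fin k) : Multiset ℕ :=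
  (Finset.univ : Finset (Fin k)).val.map (fun i => (colorClass f i).card)

/-- `f` is a `k`-color weak maximizer of `W` on `G`. -/
def IsWeakMaximizer {V : Type*} [Fintype V] [DecidableEq V] {k : ℕ}
    (G : SimpleGraph V) (f : V → Fin k) : Prop :=
  Function.Surjective f ∧ ∀ g : V → Fin k, Function.Surjective g →
    colorType g = colorType f → wienerColoring G g ≤ wienerColoring G f

/-- The coloring obtained from `f` by swapping the colors of `u` and `v`. -/
def swapColors {V α : Type*} [DecidableEq V] (f : V → α) (u v : V) : V → α :=
  f ∘ Equiv.swap u v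

/-- `f` is a `k`-color local weak maximizer of `W` on `G`. -/
def IsLocalWeakMaximizer {V : Type*} [Fintype V] [DecidableEq V] {k : ℕ}
    (G : SimpleGraph V) (f : V → Fin k) : Prop :=
  Function.Surjective f ∧ ∀ u v : V, G.Adj u v →
    wienerColoring G (swapColors f u v) ≤ wienerColoring G f

/-- The number of vertices to the left of `u` in the path that get the same color as `u`. -/
def leftCount {n k : ℕ} (f : Fin n → Fin k) (u : Fin n) : ℕ :=
  (Finset.univ.filter (fun w => w < u ∧ f w = f u)).card

/-- The number of vertices to the right of `u` in the path that get the same color as `u`. -/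
def rightCount {n k : ℕ} (f : Fin n → Fin k) (u : Fin n) : ℕ :=
  (Finset.univ.filter (fun w => u < w ∧ f w = f u)).card

/-- The sum of the `j` largest entries of a multiset of naturals. -/
def sumLargest (s : Multiset ℕ) (j : ℕ) : ℕ :=
  (((s.sort (· ≤ ·)).reverse).take j).sum

/-- `x ≺ y` : `x` is majorized by `y`. -/
def MajorizedBy (x y : Multiset ℕ) : Prop :=
  x.card = y.card ∧ x.sum = y.sum ∧ ∀ j, sumLargest x j ≤ sumLargest y j

/-- The reverse Robin Hood transfer `R_{j,j'}` applied to the (sorted) list `t`,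
with `j ≤ j'` zero-indexed: subtract `1` from the `j`-th entry and add `1` to the `j'`-th
entry; the result is recorded as a multiset (i.e. up to rearrangement). -/
def rhTransfer (t : List ℕ) (j j' : ℕ) : Multiset ℕ :=
  ↑((t.set j (t.getD j 0 - 1)).set j' ((t.set j (t.getD j 0 - 1)).getD j' 0 + 1))

/-- `t(n,k)` : the unique nondecreasing `k`-tuple of positive integers summing to `n`
whose entries pairwise differ by at most one, as a multiset. -/
def equitableType (n k : ℕ) : Multiset ℕ :=
  Multiset.replicate (k - n % k) (n / k) + Multiset.replicate (n % k) (n / k + 1)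

/-- One step of the operation `R`: `s ∈ R({t})`, i.e. `s = t` or `s` is obtained from `t` by
a reverse Robin Hood transfer between two entries that are equal and even. -/
def REstep (t s : Multiset ℕ) : Prop :=
  s = t ∨ ∃ m : ℕ, Even m ∧ 2 ≤ t.count m ∧
    s = (t - Multiset.replicate 2 m) + {m - 1, m + 1}

/-- `s ∈ R^∞({t(n,k)})`. -/
def InRInfty (n k : ℕ) (s : Multiset ℕ) : Prop :=
  Relation.ReflTransGen REstep (equitableType n k) s

/-!
Let `h = n / 2`. In the cycle, `d(u, v)` is the number of arcs of `h` consecutive vertices that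
contain `u` but not `v`. Hence `2 W(A)` is the sum, over all such arcs, of `a * (|A| - a)`, where
`a` is the number of elements of `A` in the arc. The `a`'s have a sum depending only on `|A|`, so by
concavity `W(A)` is largest when they take at most two consecutive values. Moving an arc by one step
exchanges a vertex `v` for `v + h`, so this happens as soon as at most one vertex enters `A` under
the half turn `v ↦ v + h`.

Every coloring has the type of one whose classes all have this property: along the order
`0, h, -1, h - 1, -2, h - 2, …`, the half turn moves each vertex to a (cyclically) neighboring
position, so it is enough to lay out the classes as consecutive intervals; for even `n`, where the
half turn swaps the positions `2q` and `2q + 1`, those of even size come first. Thus the upper bound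
obtained by maximizing each class separately is attained for every type.
-/

section Colorings

variable {V : Type*} [Fintype V] {k : ℕ}

lemma sum_map_colorType (f : V → Fin k) (M : ℕ → ℕ) :
    ((colorType f).map M).sum = ∑ i, M #(colorClass f i) := by
  rw [colorType, Multiset.map_map]
  rfl

lemma surjective_iff_zero_notMem_colorType (f : V → Fin k) :
    Function.Surjective f ↔ 0 ∉ colorType f := by
  simp [colorType, colorClass, Function.Surjective, filter_eq_empty_iff]

variable [DecidableEq V]

/-- The largest Wiener index of a set of `m` vertices of `G` (and `0` if `G` has fewer than `m`
vertices). -/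
noncomputable def maxWiener (G : SimpleGraph V) (m : ℕ) : ℕ :=
  (powersetCard m univ).sup (wienerSet G)

lemma wienerSet_le_maxWiener (G : SimpleGraph V) (A : Finset V) :
    wienerSet G A ≤ maxWiener G #A :=
  le_sup (mem_powersetCard_univ.mpr rfl)

lemma wienerSet_eq_maxWiener_iff (G : SimpleGraph V) (A : Finset V) :
    wienerSet G A = maxWiener G #A ↔ IsWienerMaximizer G A := by
  rw [le_antisymm_iff, and_iff_right (wienerSet_le_maxWiener G A), maxWiener, Finset.sup_le_iff]
  simp only [mem_powersetCard_univ, IsWienerMaximizer]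

lemma wienerColoring_le_sum_maxWiener (G : SimpleGraph V) (f : V → Fin k) :
    wienerColoring G f ≤ ((colorType f).map (maxWiener G)).sum := by
  rw [sum_map_colorType]
  exact sum_le_sum fun i _ => wienerSet_le_maxWiener G _

lemma wienerColoring_eq_sum_maxWiener_iff (G : SimpleGraph V) (f : V → Fin k) :
    wienerColoring G f = ((colorType f).map (maxWiener G)).sum ↔
      ∀ i, IsWienerMaximizer G (colorClass f i) := by
  simp only [sum_map_colorType, wienerColoring, ← wienerSet_eq_maxWiener_iff,
    sum_eq_sum_iff_of_le fun i _ => wienerSet_le_maxWiener G (colorClass f i), mem_univ,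
    forall_const]

lemma isWeakMaximizer_iff_of_classes_maximize {G : SimpleGraph V} {f g : V → Fin k}
    (hf : Function.Surjective f) (hgf : colorType g = colorType f)
    (hg : ∀ i, IsWienerMaximizer G (colorClass g i)) :
    IsWeakMaximizer G f ↔ ∀ i, IsWienerMaximizer G (colorClass f i) := by
  rw [← wienerColoring_eq_sum_maxWiener_iff] at hg ⊢
  constructor
  · intro h
    have hsurj : Function.Surjective g := by
      rwa [surjective_iff_zero_notMem_colorType, hgf, ← surjective_iff_zero_notMem_colorType]
    refine (wienerColoring_le_sum_maxWiener G f).antisymm ?_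
    rw [← hgf, ← hg]
    exact h.2 g hsurj hgf
  · intro h
    refine ⟨hf, fun f' _ hf' => ?_⟩
    rw [h, ← hf']
    exact wienerColoring_le_sum_maxWiener G f'

end Colorings

section CutRepresentation

lemma sum_mul_sub_le_of_balanced {ι : Type*} {s : Finset ι} {a b : ι → ℤ} (m c : ℤ)
    (ha : ∀ i ∈ s, a i = c ∨ a i = c + 1) (hsum : ∑ i ∈ s, b i = ∑ i ∈ s, a i) :
    ∑ i ∈ s, b i * (m - b i) ≤ ∑ i ∈ s, a i * (m - a i) := by
  have chord : ∀ i ∈ s, b i * (m - b i) ≤ a i * (m - a i) + (m - 2 * c - 1) * (b i - a i) := by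
    intro i hi
    have ha₀ : (a i - c) * (a i - c - 1) = 0 := by
      rcases ha i hi with h | h <;> rw [h] <;> ring
    have hb₀ : 0 ≤ (b i - c) * (b i - c - 1) := by
      rcases le_or_gt (b i) c with h | h
      · exact mul_nonneg_of_nonpos_of_nonpos (by lia) (by lia)
      · exact mul_nonneg (by lia) (by lia)
    linarith
  calc ∑ i ∈ s, b i * (m - b i)
      ≤ ∑ i ∈ s, (a i * (m - a i) + (m - 2 * c - 1) * (b i - a i)) := sum_le_sum chord
    _ = ∑ i ∈ s, a i * (m - a i) := by
      rw [sum_add_distrib, ← mul_sum, sum_sub_distrib, hsum, sub_self, mul_zero, add_zero]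

variable {V ι : Type*} [DecidableEq V] [Fintype ι]

/-- The sets `H i` represent the metric of `G` by cuts: `d(u, v)` is the number of indices `i` such
that `H i` contains `u` but not `v`. Only one of the two ways to separate `u` from `v` is counted,
so that `2 W(A)` is the sum of `#(A ∩ H i) * #(A \ H i)`. -/
def IsCutRepresentation (G : SimpleGraph V) (H : ι → Finset V) : Prop :=
  ∀ u v, G.dist u v = #{i | u ∈ H i ∧ v ∉ H i}

namespace IsCutRepresentation

variable {G : SimpleGraph V} {H : ι → Finset V}

lemma card_filter_mem_eq (hH : IsCutRepresentation G H) (u v : V) :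
    #{i | u ∈ H i} = #{i | v ∈ H i} := by
  have hsep : #{i | u ∈ H i ∧ v ∉ H i} = #{i | v ∈ H i ∧ u ∉ H i} := by
    rw [← hH u v, ← hH v u, G.dist_comm]
  rw [← card_filter_add_card_filter_not (s := {i | u ∈ H i}) (v ∈ H ·),
    ← card_filter_add_card_filter_not (s := {i | v ∈ H i}) (u ∈ H ·)]
  simp only [filter_filter, hsep, and_comm]

lemma sum_dist_offDiag (hH : IsCutRepresentation G H) (A : Finset V) :
    ∑ p ∈ A.offDiag, G.dist p.1 p.2 = ∑ i, #(A ∩ H i) * #(A \ H i) := by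
  have cut : ∀ i, {p ∈ A.offDiag | p.1 ∈ H i ∧ p.2 ∉ H i} = (A ∩ H i) ×ˢ (A \ H i) := by
    intro i
    ext p
    simp only [mem_filter, mem_offDiag, mem_product, mem_inter, mem_sdiff]
    grind
  calc ∑ p ∈ A.offDiag, G.dist p.1 p.2
      = ∑ p ∈ A.offDiag, #{i | p.1 ∈ H i ∧ p.2 ∉ H i} := sum_congr rfl fun p _ => hH p.1 p.2
    _ = ∑ i, #{p ∈ A.offDiag | p.1 ∈ H i ∧ p.2 ∉ H i} := by
      simp only [card_filter]
      exact sum_comm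
    _ = ∑ i, #(A ∩ H i) * #(A \ H i) := by simp only [cut, card_product]

lemma sum_card_inter_eq_of_card_eq (hH : IsCutRepresentation G H) {A B : Finset V}
    (hBA : #B = #A) : ∑ i, #(B ∩ H i) = ∑ i, #(A ∩ H i) := by
  have double_count : ∀ C : Finset V, ∑ i, #(C ∩ H i) = ∑ v ∈ C, #{i | v ∈ H i} := fun C => by
    simp only [← filter_mem_eq_inter]
    exact (sum_card_bipartiteAbove_eq_sum_card_bipartiteBelow fun v i => v ∈ H i).symm
  rcases isEmpty_or_nonempty V with _ | ⟨⟨v₀⟩⟩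
  · rw [Subsingleton.elim A B]
  · simp only [double_count, hH.card_filter_mem_eq _ v₀, sum_const, hBA]

lemma isWienerMaximizer_of_balanced [Fintype V] (hH : IsCutRepresentation G H) {A : Finset V}
    (c : ℕ) (hA : ∀ i, #(A ∩ H i) = c ∨ #(A ∩ H i) = c + 1) : IsWienerMaximizer G A := by
  intro B hBA
  have cast_sdiff : ∀ (C : Finset V) (i : ι), (#(C \ H i) : ℤ) = #C - #(C ∩ H i) := fun C i => by
    rw [← card_sdiff_add_card_inter C (H i), Nat.cast_add, add_sub_cancel_right]
  have hsum : ∑ i, (#(B ∩ H i) : ℤ) = ∑ i, (#(A ∩ H i) : ℤ) := by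
    exact_mod_cast hH.sum_card_inter_eq_of_card_eq hBA
  refine Nat.div_le_div_right ?_
  rw [hH.sum_dist_offDiag, hH.sum_dist_offDiag]
  zify
  simp only [cast_sdiff, hBA]
  exact sum_mul_sub_le_of_balanced _ c (fun i _ => mod_cast hA i) hsum

end IsCutRepresentation

end CutRepresentation

section CycleDistance

variable {n : ℕ}

lemma cycleGraphZMod_edist_add_natCast_le (u : ZMod n) (m : ℕ) :
    (cycleGraphZMod n).edist u (u + m) ≤ m := by
  induction m with
  | zero => simp
  | succ m ih =>
    have hstep : (cycleGraphZMod n).edist (u + m) (u + m + 1) ≤ 1 := by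
      rw [edist_le_one_iff_adj_or_eq, cycleGraphZMod, fromRel_adj]
      tauto
    push_cast
    rw [← add_assoc]
    exact SimpleGraph.edist_triangle.trans (add_le_add ih hstep)

lemma cycleGraphZMod_edist_add_intCast_le (u : ZMod n) (z : ℤ) :
    (cycleGraphZMod n).edist u (u + z) ≤ z.natAbs := by
  obtain ⟨m, rfl | rfl⟩ := z.eq_nat_or_neg
  · simpa using cycleGraphZMod_edist_add_natCast_le u m
  · rw [edist_comm]
    simpa [sub_eq_add_neg] using cycleGraphZMod_edist_add_natCast_le (u - (m : ZMod n)) m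

lemma natAbs_valMinAbs_one_le (n : ℕ) : (1 : ZMod n).valMinAbs.natAbs ≤ 1 := by
  rcases n with _ | _ | n
  · simp
  · exact (ZMod.natAbs_valMinAbs_le _).trans (by decide)
  · have := ZMod.valMinAbs_natCast_of_le_half (n := n + 1 + 1) (a := 1) (by lia)
    rw [Nat.cast_one] at this
    simp [this]

lemma natAbs_valMinAbs_sub_le_one_of_adj {u v : ZMod n} (h : (cycleGraphZMod n).Adj u v) :
    (v - u).valMinAbs.natAbs ≤ 1 := by
  rw [cycleGraphZMod, fromRel_adj] at h
  obtain ⟨-, rfl | rfl⟩ := h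
  · simpa using natAbs_valMinAbs_one_le n
  · rw [← ZMod.natAbs_valMinAbs_neg]
    simpa using natAbs_valMinAbs_one_le n

lemma natAbs_valMinAbs_sub_le_length {u v : ZMod n} (p : (cycleGraphZMod n).Walk u v) :
    (v - u).valMinAbs.natAbs ≤ p.length := by
  induction p with
  | nil => simp
  | @cons u w v huw p ih =>
    calc (v - u).valMinAbs.natAbs = ((v - w) + (w - u)).valMinAbs.natAbs := by
          rw [sub_add_sub_cancel]
      _ ≤ ((v - w).valMinAbs + (w - u).valMinAbs).natAbs := ZMod.natAbs_valMinAbs_add_le _ _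
      _ ≤ (v - w).valMinAbs.natAbs + (w - u).valMinAbs.natAbs := Int.natAbs_add_le _ _
      _ ≤ p.length + 1 := add_le_add ih (natAbs_valMinAbs_sub_le_one_of_adj huw)

lemma cycleGraphZMod_dist (u v : ZMod n) :
    (cycleGraphZMod n).dist u v = (v - u).valMinAbs.natAbs := by
  have hedist : (cycleGraphZMod n).edist u v = (v - u).valMinAbs.natAbs := by
    refine le_antisymm ?_ (le_iInf fun p => mod_cast natAbs_valMinAbs_sub_le_length p)
    simpa using cycleGraphZMod_edist_add_intCast_le u (v - u).valMinAbs
  rw [SimpleGraph.dist, hedist, ENat.toNat_natCast]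

end CycleDistance

section Arcs

variable {n : ℕ}

lemma injOn_add_natCast_range {m : ℕ} (hm : m ≤ n) (i : ZMod n) :
    Set.InjOn (fun t : ℕ => i + (t : ZMod n)) (range m) := by
  intro s hs t ht hst
  rw [coe_range, Set.mem_Iio] at hs ht
  have hval := congrArg ZMod.val (add_left_cancel hst)
  rwa [ZMod.val_cast_of_lt (hs.trans_le hm), ZMod.val_cast_of_lt (ht.trans_le hm)] at hval

variable [NeZero n]

/-- The arc `{i, i + 1, …, i + ℓ - 1}` of the cycle (all of it if `n ≤ ℓ`). -/
def arc (ℓ : ℕ) (i : ZMod n) : Finset (ZMod n) :=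
  {u | (u - i).val < ℓ}

lemma mem_arc {ℓ : ℕ} {i u : ZMod n} : u ∈ arc ℓ i ↔ (u - i).val < ℓ := by
  rw [arc, mem_filter_univ]

lemma card_filter_val (p : ℕ → Prop) [DecidablePred p] :
    #{j : ZMod n | p j.val} = #{x ∈ range n | p x} := by
  refine card_nbij ZMod.val ?_ (ZMod.val_injective n).injOn ?_
  · intro j hj
    simpa [ZMod.val_lt] using hj
  · intro x hx
    obtain ⟨hxn, hpx⟩ := mem_filter.mp hx
    have hval : (x : ZMod n).val = x := ZMod.val_cast_of_lt (mem_range.mp hxn)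
    exact ⟨x, by simpa [hval] using hpx, hval⟩

lemma card_arcs_separating (ℓ : ℕ) (u v : ZMod n) :
    #{i : ZMod n | u ∈ arc ℓ i ∧ v ∉ arc ℓ i} =
      min ℓ (n - (v - u).val) - (ℓ - (v - u).val) := by
  set w := (v - u).val with hw
  calc #{i : ZMod n | u ∈ arc ℓ i ∧ v ∉ arc ℓ i}
      = #{j : ZMod n | j.val < ℓ ∧ ¬ (j.val + w) % n < ℓ} := by
        refine card_equiv (Equiv.subLeft u) fun i => ?_
        simp only [mem_filter_univ, mem_arc, Equiv.subLeft_apply, hw, ← ZMod.val_add]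
        rw [show u - i + (v - u) = v - i by ring]
    _ = #{x ∈ range n | x < ℓ ∧ ¬ (x + w) % n < ℓ} :=
        card_filter_val fun x => x < ℓ ∧ ¬ (x + w) % n < ℓ
    _ = #(Ico (ℓ - w) (min ℓ (n - w))) := by
        have hwn : w < n := ZMod.val_lt _
        congr 1
        ext x
        simp only [mem_filter, mem_range, mem_Ico, lt_min_iff]
        rcases lt_or_ge (x + w) n with hx | hx
        · rw [Nat.mod_eq_of_lt hx]
          lia
        · have hwrap : x < n → (x + w) % n = x + w - n := fun hxn => by
            rw [Nat.mod_eq_sub_mod hx, Nat.mod_eq_of_lt (by lia)]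
          lia
    _ = min ℓ (n - w) - (ℓ - w) := Nat.card_Ico _ _

lemma isCutRepresentation_halfArc :
    IsCutRepresentation (cycleGraphZMod n) (arc (n / 2) : ZMod n → Finset (ZMod n)) := by
  intro u v
  have := ZMod.val_lt (v - u)
  rw [cycleGraphZMod_dist, ZMod.valMinAbs_natAbs_eq_min, card_arcs_separating]
  lia

lemma image_add_natCast_range {ℓ : ℕ} (hℓ : ℓ ≤ n) (i : ZMod n) :
    (range ℓ).image (fun t : ℕ => i + (t : ZMod n)) = arc ℓ i := by
  ext u
  simp only [mem_image, mem_range, mem_arc]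
  constructor
  · rintro ⟨t, ht, rfl⟩
    rwa [add_sub_cancel_left, ZMod.val_cast_of_lt (ht.trans_le hℓ)]
  · exact fun hu => ⟨(u - i).val, hu, by simp⟩

lemma sum_arc {M : Type*} [AddCommMonoid M] {ℓ : ℕ} (hℓ : ℓ ≤ n) (i : ZMod n) (w : ZMod n → M) :
    ∑ v ∈ arc ℓ i, w v = ∑ t ∈ range ℓ, w (i + t) := by
  rw [← image_add_natCast_range hℓ, sum_image (injOn_add_natCast_range hℓ i)]

lemma card_inter_arc_add_one {ℓ : ℕ} (hℓ : ℓ ≤ n) (A : Finset (ZMod n)) (i : ZMod n) :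
    #(A ∩ arc ℓ (i + 1)) + (if i ∈ A then 1 else 0) =
      #(A ∩ arc ℓ i) + if i + (ℓ : ZMod n) ∈ A then 1 else 0 := by
  have hcard : ∀ i, #(A ∩ arc ℓ i) = ∑ t ∈ range ℓ, if i + (t : ZMod n) ∈ A then 1 else 0 := by
    intro i
    rw [inter_comm, ← filter_mem_eq_inter, card_filter, sum_arc hℓ]
  rw [hcard, hcard, ← sum_range_succ, sum_range_succ']
  simp only [Nat.cast_add, Nat.cast_one, Nat.cast_zero, add_zero, add_assoc, add_comm (1 : ZMod n)]

lemma le_add_sum_of_add_one_le {g w : ZMod n → ℕ} (h : ∀ i, g (i + 1) ≤ g i + w i)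
    (i j : ZMod n) : g j ≤ g i + ∑ v, w v := by
  have walk : ∀ t : ℕ, g (i + t) ≤ g i + ∑ s ∈ range t, w (i + s) := by
    intro t
    induction t with
    | zero => simp
    | succ t ih =>
      rw [sum_range_succ, Nat.cast_succ, ← add_assoc, ← add_assoc]
      exact (h _).trans (Nat.add_le_add_right ih _)
  calc g j = g (i + (j - i).val) := by simp
    _ ≤ g i + ∑ s ∈ range (j - i).val, w (i + s) := walk _
    _ = g i + ∑ v ∈ arc (j - i).val i, w v := by rw [sum_arc (ZMod.val_lt _).le]
    _ ≤ g i + ∑ v, w v := by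
      gcongr
      exact subset_univ _

/-- The vertices that enter `A` under the translation by `d`: those outside `A` whose translate
lies in `A`. -/
def entries (d : ZMod n) (A : Finset (ZMod n)) : Finset (ZMod n) :=
  {v | v ∉ A ∧ v + d ∈ A}

lemma card_inter_arc_le {ℓ : ℕ} (hℓ : ℓ ≤ n) (A : Finset (ZMod n)) (i j : ZMod n) :
    #(A ∩ arc ℓ j) ≤ #(A ∩ arc ℓ i) + #(entries ℓ A) := by
  rw [entries, card_filter]
  refine le_add_sum_of_add_one_le (g := fun i => #(A ∩ arc ℓ i)) (fun i => ?_) i j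
  have := card_inter_arc_add_one hℓ A i
  grind

lemma isWienerMaximizer_of_card_entries_le_one {A : Finset (ZMod n)}
    (h : #(entries (n / 2 : ℕ) A) ≤ 1) : IsWienerMaximizer (cycleGraphZMod n) A := by
  obtain ⟨i, -, hi⟩ := exists_min_image univ (fun i => #(A ∩ arc (n / 2) i)) univ_nonempty
  refine isCutRepresentation_halfArc.isWienerMaximizer_of_balanced #(A ∩ arc (n / 2) i) fun j => ?_
  have hle := hi j (mem_univ j)
  have hge := card_inter_arc_le (Nat.div_le_self n 2) A i j
  lia

end Arcs

section HalfTurnOrder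

variable {n : ℕ}

/-- The vertex at position `p` in the enumeration `0, h, -1, h - 1, -2, h - 2, …` of the cycle,
with `h = n / 2`, along which the half turn `v ↦ v + h` only moves vertices between cyclically
consecutive positions. -/
def halfTurnVertex (n p : ℕ) : ZMod n :=
  ((if p % 2 = 0 then 0 else n / 2 : ℤ) - p / 2 : ℤ)

/-- The action of the half turn `v ↦ v + n / 2` on the positions of `halfTurnVertex`: it swaps
`2q` and `2q + 1` if `n` is even, and it is the cyclic shift of `{0, …, n - 1}` if `n` is odd. -/
def halfTurnNext (n p : ℕ) : ℕ :=
  if n % 2 = 0 then (if p % 2 = 0 then p + 1 else p - 1) else (if p + 1 = n then 0 else p + 1)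

lemma halfTurnNext_lt {p : ℕ} (hp : p < n) : halfTurnNext n p < n := by
  unfold halfTurnNext
  split_ifs <;> lia

lemma halfTurnVertex_add_half (n p : ℕ) :
    halfTurnVertex n p + (n / 2 : ℕ) = halfTurnVertex n (halfTurnNext n p) := by
  unfold halfTurnVertex
  rw [← Int.cast_natCast (n / 2), ← Int.cast_add, ZMod.intCast_eq_intCast_iff_dvd_sub]
  refine ⟨if p % 2 = 0 then 0 else -1, ?_⟩
  unfold halfTurnNext
  split_ifs <;> lia

variable [NeZero n]

lemma halfTurnVertex_bijective : Function.Bijective fun p : Fin n => halfTurnVertex n p := by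
  rw [Fintype.bijective_iff_injective_and_card]
  refine ⟨fun p q hpq => ?_, by simp [ZMod.card]⟩
  have hdvd := (ZMod.intCast_eq_intCast_iff_dvd_sub _ _ _).mp hpq
  have := p.isLt
  have := q.isLt
  have hzero := Int.eq_zero_of_abs_lt_dvd hdvd (by rw [abs_lt]; split_ifs <;> lia)
  ext
  split_ifs at hzero <;> lia

lemma isWienerMaximizer_of_interval {A : Finset (ZMod n)} {s m : ℕ}
    (hA : ∀ p < n, halfTurnVertex n p ∈ A ↔ s ≤ p ∧ p < s + m) (hs : Even m → Even s) :
    IsWienerMaximizer (cycleGraphZMod n) A := by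
  refine isWienerMaximizer_of_card_entries_le_one (card_le_one.mpr fun v hv w hw => ?_)
  obtain ⟨⟨p, hp⟩, rfl⟩ := halfTurnVertex_bijective.surjective v
  obtain ⟨⟨q, hq⟩, rfl⟩ := halfTurnVertex_bijective.surjective w
  have enters : ∀ p < n, halfTurnVertex n p ∈ entries (n / 2 : ℕ) A →
      ¬ (s ≤ p ∧ p < s + m) ∧ s ≤ halfTurnNext n p ∧ halfTurnNext n p < s + m := fun p hp h => by
    rwa [entries, mem_filter_univ, halfTurnVertex_add_half, hA p hp,
      hA _ (halfTurnNext_lt hp)] at h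
  -- For odd `n`, only the position before `s` is shifted into the interval. For even `n`, the
  -- interval cuts a pair `{2q, 2q + 1}` at its start if `s` is odd and at its end if `s + m` is
  -- odd; both happen only if `m` is even and `s` is odd.
  have hpq : p = q := by
    have hv' := enters p hp hv
    have hw' := enters q hq hw
    unfold halfTurnNext at hv' hw'
    rw [Nat.even_iff, Nat.even_iff] at hs
    split_ifs at hv' hw' <;> omega
  simp only [hpq]

end HalfTurnOrder

section Intervals

lemma apply_eq_iff_mem_interval_of_monotone {n : ℕ} {α : Type*} [LinearOrder α] {g : Fin n → α}
    (hg : Monotone g) (a : α) (p : Fin n) :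
    g p = a ↔ #{q | g q < a} ≤ p ∧ p < #{q | g q < a} + #{q | g q = a} := by
  have hle : #{q | g q < a} + #{q | g q = a} = #{q | g q ≤ a} := by
    rw [← card_union_of_disjoint (disjoint_filter.mpr fun q _ h => h.ne), ← filter_or]
    simp only [le_iff_lt_or_eq]
  rw [hle, Tuple.lt_card_le_iff_apply_le_of_monotone hg, ← not_lt,
    Tuple.lt_card_lt_iff_apply_lt_of_monotone hg, not_lt, and_comm, le_antisymm_iff]

lemma even_card_of_even_card_fibers {α β : Type*} [DecidableEq β] {f : α → β} {s : Finset α}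
    (h : ∀ x ∈ s, Even #{y ∈ s | f y = f x}) : Even #s := by
  rw [card_eq_sum_card_image f s]
  exact even_sum _ (forall_mem_image.mpr h)

lemma exists_perm_fibers_intervals {n : ℕ} {α : Type*} [LinearOrder α] (f : Fin n → α) :
    ∃ τ : Equiv.Perm (Fin n), ∀ a, ∃ s : ℕ,
      (∀ p : Fin n, f (τ p) = a ↔ s ≤ p ∧ p < s + #{q | f q = a}) ∧
      (Even #{q | f q = a} → Even s) := by
  -- Sorting by the parity of the fiber first, only even fibers can precede an even fiber.
  let key (a : α) : ℕ ×ₗ α := toLex (#{q | f q = a} % 2, a)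
  have key_inj : ∀ a b, key a = key b ↔ a = b := fun a b =>
    ⟨fun h => congrArg (fun x => (ofLex x).2) h, congrArg key⟩
  let τ := Tuple.sort (key ∘ f)
  refine ⟨τ, fun a => ⟨#{q | key (f (τ q)) < key a}, fun p => ?_, fun ha => ?_⟩⟩
  · have hcard : #{q | key (f (τ q)) = key a} = #{q | f q = a} :=
      card_equiv τ fun q => by simp [key_inj]
    rw [← hcard, ← key_inj]
    exact apply_eq_iff_mem_interval_of_monotone (Tuple.monotone_sort (key ∘ f)) (key a) p
  · have hcard : #{q | key (f (τ q)) < key a} = #{q | key (f q) < key a} :=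
      card_equiv τ fun q => by simp
    rw [hcard]
    refine even_card_of_even_card_fibers (f := f) fun q hq => ?_
    rw [mem_filter_univ] at hq
    have hfiber : {r ∈ ({r | key (f r) < key a} : Finset (Fin n)) | f r = f q} =
        ({r | f r = f q} : Finset (Fin n)) := by
      ext r
      simp only [mem_filter, mem_univ, true_and]
      exact and_iff_right_of_imp fun hr => hr ▸ hq
    have hlt := Prod.Lex.toLex_lt_toLex.mp hq
    rw [Nat.even_iff.mp ha] at hlt
    rw [hfiber, Nat.even_iff]
    exact (hlt.resolve_left (Nat.not_lt_zero _)).1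

end Intervals

lemma exists_coloring_classes_maximize {n k : ℕ} [NeZero n] (f : ZMod n → Fin k) :
    ∃ g : ZMod n → Fin k, colorType g = colorType f ∧
      ∀ i, IsWienerMaximizer (cycleGraphZMod n) (colorClass g i) := by
  let P : Fin n ≃ ZMod n := Equiv.ofBijective _ halfTurnVertex_bijective
  obtain ⟨τ, hτ⟩ := exists_perm_fibers_intervals (f ∘ P)
  refine ⟨f ∘ P ∘ τ ∘ P.symm, ?_, fun i => ?_⟩
  · have hcard : ∀ i, #(colorClass (f ∘ P ∘ τ ∘ P.symm) i) = #(colorClass f i) := fun i =>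
      card_equiv ((P.symm.trans τ).trans P) fun v => by simp [colorClass]
    simp only [colorType, hcard]
  · obtain ⟨s, hs, heven⟩ := hτ i
    refine isWienerMaximizer_of_interval (fun p hp => ?_) heven
    have hP : P.symm (halfTurnVertex n p) = ⟨p, hp⟩ := P.symm_apply_apply ⟨p, hp⟩
    rw [← hs ⟨p, hp⟩]
    simp [colorClass, hP]

/-- A surjective `f : V(C_n) → {1,…,k}` is a `k`-color weak maximizer of `W` on `C_n`
iff every color class `f⁻¹(i)` is a maximizer of `W` on `C_n`. -/
theorem weakMaximizer_iff_classes_maximize (n k : ℕ) [NeZero n]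
    (f : ZMod n → Fin k) (hf : Function.Surjective f) :
    IsWeakMaximizer (cycleGraphZMod n) f ↔
      ∀ i : Fin k, IsWienerMaximizer (cycleGraphZMod n) (colorClass f i) := by
  obtain ⟨g, hgf, hg⟩ := exists_coloring_classes_maximize f
  exact isWeakMaximizer_iff_of_classes_maximize hf hgf hg
end

section
/- Suppose f, f' : V(P_n) → {1,...,k} are k-color weak maximizers of the Wiener index W on P_n. If type(f) ≺ type(f') and type(f) ≠ type(f'), then W(f) < W(f'). -/
open SimpleGraph Finset

/-!
Write `b u` for the number of vertices of the color of `u` to the right of `u` minus the number to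
the left. Summing by parts, `4 * W f = ∑ u, ∑ v, sign (v - u) * (b u - b v)`, which is at most
`∑ u, ∑ v, |b u - b v|`, with equality when `b` is antitone. Swapping the colors of adjacent
vertices `p ⋖ q` of different colors changes `W` by `b q - b p`, so `b` is antitone for every local
weak maximizer. A color class of size `a` has the balances `a - 1, a - 3, …, 1 - a`, so the upper
bound is the sum of `balanceGap a b` over all pairs of entries of the type of `f`. This symmetric
kernel is convex in each argument: its second difference counts the common balances twice. Applying
Karamata's inequality in one argument and then in the other shows that the bound is monotone under
majorization, strictly so because two classes of sizes of equal parity have a common balance.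
-/

section Karamata

/-- The second forward difference of a sequence; a sequence is convex when it is nonnegative. -/
def secondDiff {R : Type*} [Ring R] (φ : ℕ → R) (t : ℕ) : R := φ (t + 2) - 2 * φ (t + 1) + φ t

/-- The sum of the truncated differences `(a - c)⁺` over the entries `a` of `x`. For multisets of
equal size and equal sum, majorization is the pointwise order of these functions of `c`. -/
def excess (x : Multiset ℕ) (c : ℕ) : ℕ := (x.map fun a => a - c).sum

theorem excess_cons (a : ℕ) (x : Multiset ℕ) (c : ℕ) :
    excess (a ::ₘ x) c = (a - c) + excess x c := by
  simp [excess]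

theorem excess_zero (x : Multiset ℕ) : excess x 0 = x.sum := by
  simp [excess]

theorem excess_le_sum (x : Multiset ℕ) (c : ℕ) : excess x c ≤ x.sum := by
  induction x using Multiset.induction_on with
  | empty => simp [excess]
  | cons a x ih =>
    rw [excess_cons, Multiset.sum_cons]
    omega

theorem count_succ_add_two_mul_excess (x : Multiset ℕ) (c : ℕ) :
    x.count (c + 1) + 2 * excess x (c + 1) = excess x c + excess x (c + 2) := by
  induction x using Multiset.induction_on with
  | empty => simp [excess]
  | cons a x ih =>
    simp only [Multiset.count_cons, excess_cons]
    split_ifs <;> omega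

theorem count_zero_add_sum (x : Multiset ℕ) : x.count 0 + x.sum = x.card + excess x 1 := by
  induction x using Multiset.induction_on with
  | empty => simp [excess]
  | cons a x ih =>
    simp only [Multiset.count_cons, excess_cons, Multiset.sum_cons, Multiset.card_cons]
    split_ifs <;> omega

theorem eq_of_card_eq_of_excess_eq {x y : Multiset ℕ} (hcard : x.card = y.card)
    (h : ∀ c, excess x c = excess y c) : x = y := by
  ext c
  cases c with
  | zero =>
    have hsum := h 0
    rw [excess_zero, excess_zero] at hsum
    have hx := count_zero_add_sum x
    have hy := count_zero_add_sum y
    rw [h 1] at hx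
    omega
  | succ c =>
    have hx := count_succ_add_two_mul_excess x c
    have hy := count_succ_add_two_mul_excess y c
    simp only [h] at hx
    omega

theorem sum_take_le_excess_add (l : List ℕ) (c j : ℕ) :
    (l.take j).sum ≤ excess (l : Multiset ℕ) c + c * j := by
  induction l generalizing j with
  | nil => simp
  | cons a l ih =>
    cases j with
    | zero => simp
    | succ j =>
      have := ih j
      rw [← Multiset.cons_coe, excess_cons, List.take_succ_cons, List.sum_cons, mul_add_one]
      omega

theorem exists_sum_take_eq_excess_add {l : List ℕ} (hl : l.Pairwise (· ≥ ·)) (c : ℕ) :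
    ∃ j, (l.take j).sum = excess (l : Multiset ℕ) c + c * j := by
  induction l with
  | nil => exact ⟨0, by simp [excess]⟩
  | cons a l ih =>
    obtain ⟨ha, hl⟩ := List.pairwise_cons.1 hl
    rcases le_total c a with hca | hac
    · obtain ⟨j, hj⟩ := ih hl
      refine ⟨j + 1, ?_⟩
      rw [← Multiset.cons_coe, excess_cons, List.take_succ_cons, List.sum_cons, mul_add_one]
      omega
    · refine ⟨0, ?_⟩
      have hle : ∀ b ∈ a :: l, b - c = 0 := List.forall_mem_cons.2
        ⟨Nat.sub_eq_zero_of_le hac, fun b hb => Nat.sub_eq_zero_of_le ((ha b hb).trans hac)⟩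
      have hzero : excess ↑(a :: l) c = 0 := by
        rw [excess, Multiset.map_congr rfl hle, Multiset.map_const', Multiset.sum_replicate,
          smul_zero]
      rw [hzero, List.take_zero, List.sum_nil, mul_zero, add_zero]

theorem sum_range_secondDiff {R : Type*} [Ring R] (φ : ℕ → R) (a : ℕ) :
    ∑ t ∈ range a, secondDiff φ t = φ (a + 1) - φ a - (φ 1 - φ 0) := by
  rw [← sum_range_sub (fun t => φ (t + 1) - φ t)]
  refine sum_congr rfl fun t _ => ?_
  rw [secondDiff, two_mul]
  abel

theorem eq_add_sum_secondDiff {R : Type*} [CommRing R] (φ : ℕ → R) (a : ℕ) :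
    φ a = φ 0 + a * (φ 1 - φ 0) + ∑ t ∈ range a, secondDiff φ t * (a - (t + 1) : ℕ) := by
  induction a with
  | zero => simp
  | succ a ih =>
    have hstep : ∑ t ∈ range (a + 1), secondDiff φ t * (a + 1 - (t + 1) : ℕ)
        = ∑ t ∈ range a, (secondDiff φ t * (a - (t + 1) : ℕ) + secondDiff φ t) := by
      rw [sum_range_succ, Nat.sub_self, Nat.cast_zero, mul_zero, add_zero]
      refine sum_congr rfl fun t ht => ?_
      rw [show a + 1 - (t + 1) = a - (t + 1) + 1 by have := mem_range.1 ht; omega]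
      push_cast
      ring
    rw [hstep, sum_add_distrib, sum_range_secondDiff]
    push_cast
    linear_combination ih

theorem sum_map_eq_sum_secondDiff {R : Type*} [CommRing R] (φ : ℕ → R) {x : Multiset ℕ} {N : ℕ}
    (hN : x.sum ≤ N) :
    (x.map φ).sum = x.card * φ 0 + x.sum * (φ 1 - φ 0)
      + ∑ t ∈ range N, secondDiff φ t * excess x (t + 1) := by
  induction x using Multiset.induction_on with
  | empty => simp [excess]
  | cons a x ih =>
    rw [Multiset.sum_cons] at hN
    have hsub : range a ⊆ range N := range_subset_range.2 (by omega)
    have hzero : ∀ t ∈ range N, t ∉ range a → secondDiff φ t * (a - (t + 1) : ℕ) = 0 := by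
      intro t _ ht
      rw [Nat.sub_eq_zero_of_le (by rw [mem_range] at ht; omega), Nat.cast_zero, mul_zero]
    have ha := eq_add_sum_secondDiff φ a
    rw [sum_subset hsub hzero] at ha
    simp only [excess_cons, Multiset.map_cons, Multiset.sum_cons, Multiset.card_cons, Nat.cast_add,
      Nat.cast_one, mul_add, sum_add_distrib]
    linear_combination ha + ih (by omega)

namespace MajorizedBy

variable {x y : Multiset ℕ}

theorem excess_le (h : MajorizedBy x y) (c : ℕ) : excess x c ≤ excess y c := by
  have hcoe (z : Multiset ℕ) : ((z.sort (· ≤ ·)).reverse : Multiset ℕ) = z := by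
    rw [Multiset.coe_reverse, Multiset.sort_eq]
  obtain ⟨j, hx⟩ := exists_sum_take_eq_excess_add
    (List.pairwise_reverse.2 (Multiset.pairwise_sort x (· ≤ ·))) c
  have hy := sum_take_le_excess_add (y.sort (· ≤ ·)).reverse c j
  rw [hcoe] at hx hy
  have hj := h.2.2 j
  rw [sumLargest, sumLargest] at hj
  omega

/-- Parity is what the strictness argument needs: the gap function `balanceGap · b` below has
positive second differences only at the parity of `b`. -/
theorem exists_excess_lt_of_ne (h : MajorizedBy x y) (hne : x ≠ y) :
    ∃ t, excess x (t + 1) < excess y (t + 1) ∧ ∃ b ∈ x, 0 < b ∧ b % 2 = (t + 1) % 2 := by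
  have hzero : excess x 0 = excess y 0 := by rw [excess_zero, excess_zero, h.2.1]
  obtain ⟨t, ht⟩ : ∃ t, excess x (t + 1) < excess y (t + 1) := by
    by_contra! hge
    refine hne (eq_of_card_eq_of_excess_eq h.1 fun c => ?_)
    cases c with
    | zero => exact hzero
    | succ c => exact le_antisymm (h.excess_le _) (hge c)
  by_cases hx : t + 1 ∈ x
  · exact ⟨t, ht, t + 1, hx, t.succ_pos, rfl⟩
  obtain ⟨b, hb, hbpos⟩ : ∃ b ∈ x, 0 < b := by
    by_contra! hx0
    have hsum : x.sum = 0 := Multiset.sum_eq_zero fun b hb => Nat.le_zero.1 (hx0 b hb)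
    have := excess_le_sum y (t + 1)
    have := h.2.1
    omega
  -- As `t + 1 ∉ x`, the difference `excess y - excess x` is also positive at `t` or at `t + 2`.
  have hneighbor : excess x t < excess y t ∨ excess x (t + 2) < excess y (t + 2) := by
    have hcx := count_succ_add_two_mul_excess x t
    have hcy := count_succ_add_two_mul_excess y t
    rw [Multiset.count_eq_zero_of_notMem hx] at hcx
    omega
  by_cases hpar : b % 2 = (t + 1) % 2
  · exact ⟨t, ht, b, hb, hbpos, hpar⟩
  rcases hneighbor with hlt | hlt
  · obtain ⟨s, rfl⟩ := Nat.exists_eq_succ_of_ne_zero (n := t) (by rintro rfl; exact hlt.ne hzero)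
    exact ⟨s, hlt, b, hb, hbpos, by omega⟩
  · exact ⟨t + 1, hlt, b, hb, hbpos, by omega⟩

theorem sum_map_sub_sum_map {R : Type*} [CommRing R] (h : MajorizedBy x y) (φ : ℕ → R) {N : ℕ}
    (hN : x.sum ≤ N) :
    (y.map φ).sum - (x.map φ).sum
      = ∑ t ∈ range N, secondDiff φ t * (excess y (t + 1) - excess x (t + 1)) := by
  rw [sum_map_eq_sum_secondDiff φ hN, sum_map_eq_sum_secondDiff φ (h.2.1 ▸ hN), h.1, h.2.1]
  simp only [mul_sub, sum_sub_distrib]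
  ring

variable {R : Type*} [CommRing R] [PartialOrder R] [IsStrictOrderedRing R] {φ : ℕ → R}

theorem sum_map_le_sum_map (h : MajorizedBy x y) (hφ : ∀ t, 0 ≤ secondDiff φ t) :
    (x.map φ).sum ≤ (y.map φ).sum := by
  rw [← sub_nonneg, h.sum_map_sub_sum_map φ le_rfl]
  exact sum_nonneg fun t _ =>
    mul_nonneg (hφ t) (sub_nonneg.2 (Nat.cast_le.2 (h.excess_le _)))

theorem sum_map_lt_sum_map (h : MajorizedBy x y) (hφ : ∀ t, 0 ≤ secondDiff φ t) {t : ℕ}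
    (ht : excess x (t + 1) < excess y (t + 1)) (hφt : 0 < secondDiff φ t) :
    (x.map φ).sum < (y.map φ).sum := by
  rw [← sub_pos, h.sum_map_sub_sum_map φ (Nat.le_add_right x.sum (t + 1))]
  exact sum_pos'
    (fun s _ => mul_nonneg (hφ s) (sub_nonneg.2 (Nat.cast_le.2 (h.excess_le _))))
    ⟨t, mem_range.2 (by omega), mul_pos hφt (sub_pos.2 (Nat.cast_lt.2 ht))⟩

end MajorizedBy
end Karamata

section BalanceGap

/-- The sum of `F` over the progression `a - 1, a - 3, …, 1 - a`, which is the list of side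
balances of the vertices of a color class of size `a`, from left to right. -/
def balanceSum {M : Type*} [AddCommMonoid M] (F : ℤ → M) (a : ℕ) : M :=
  ∑ i ∈ range a, F (a - 1 - 2 * i)

/-- The total distance between the side balances of a class of size `a` and those of a class of
size `b`. -/
def balanceGap (a b : ℕ) : ℤ := balanceSum (fun p => balanceSum (fun q => |p - q|) b) a

/-- The total distance between the side balances of classes with sizes in `x` and those of classes
with sizes in `y`. -/
def totalGap (x y : Multiset ℕ) : ℤ := (x.map fun a => (y.map fun b => balanceGap a b).sum).sum

theorem balanceGap_comm (a b : ℕ) : balanceGap a b = balanceGap b a := by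
  simp only [balanceGap, balanceSum]
  rw [sum_comm]
  simp only [abs_sub_comm]

theorem totalGap_comm (x y : Multiset ℕ) : totalGap x y = totalGap y x := by
  rw [totalGap, Multiset.sum_map_sum_map]
  simp only [balanceGap_comm, totalGap]

/-- The progressions of lengths `t` and `t + 2` together are the progression of length `t + 1`
shifted by `1` and by `-1`. -/
theorem secondDiff_balanceSum {R : Type*} [Ring R] (F : ℤ → R) (t : ℕ) :
    secondDiff (balanceSum F) t
      = balanceSum (fun p => F (p + 1) - 2 * F p + F (p - 1)) (t + 1) := by
  have hup : balanceSum F (t + 2) = balanceSum (fun p => F (p + 1)) (t + 1) + F (-(t + 1)) := by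
    rw [balanceSum, sum_range_succ, balanceSum]
    refine congrArg₂ (· + ·) (sum_congr rfl fun i _ => congrArg F ?_) (congrArg F ?_) <;>
      push_cast <;> ring
  have hdown : balanceSum (fun p => F (p - 1)) (t + 1) = balanceSum F t + F (-(t + 1)) := by
    rw [balanceSum, sum_range_succ, balanceSum]
    refine congrArg₂ (· + ·) (sum_congr rfl fun i _ => congrArg F ?_) (congrArg F ?_) <;>
      push_cast <;> ring
  have hsplit : balanceSum (fun p => F (p + 1) - 2 * F p + F (p - 1)) (t + 1) =
      balanceSum (fun p => F (p + 1)) (t + 1) - 2 * balanceSum F (t + 1)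
        + balanceSum (fun p => F (p - 1)) (t + 1) := by
    simp only [balanceSum, sum_add_distrib, sum_sub_distrib, mul_sum]
  rw [hsplit, hdown, secondDiff, hup]
  abel

theorem secondDiff_abs_sub (p q : ℤ) :
    |p + 1 - q| - 2 * |p - q| + |p - 1 - q| = if p = q then 2 else 0 := by
  grind

theorem secondDiff_balanceGap (b t : ℕ) :
    secondDiff (balanceGap · b) t
      = balanceSum (fun p => balanceSum (fun q => if p = q then 2 else 0) b) (t + 1) := by
  simp only [balanceGap]
  rw [secondDiff_balanceSum]
  simp only [← secondDiff_abs_sub, balanceSum, sum_add_distrib, sum_sub_distrib, mul_sum]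

theorem secondDiff_balanceGap_nonneg (b t : ℕ) : 0 ≤ secondDiff (balanceGap · b) t := by
  rw [secondDiff_balanceGap]
  exact sum_nonneg fun i _ => sum_nonneg fun j _ => by positivity

theorem secondDiff_balanceGap_pos {b t : ℕ} (hb : 0 < b) (hpar : b % 2 = (t + 1) % 2) :
    0 < secondDiff (balanceGap · b) t := by
  rw [secondDiff_balanceGap]
  -- Both progressions contain `0` (odd lengths) or both contain `1` (even lengths).
  have hcommon : ((t + 1 : ℕ) : ℤ) - 1 - 2 * (t / 2 : ℕ) = b - 1 - 2 * ((b - 1) / 2 : ℕ) := by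
    omega
  refine sum_pos' (fun i _ => sum_nonneg fun j _ => by positivity)
    ⟨t / 2, mem_range.2 (by omega), sum_pos' (fun j _ => by positivity)
      ⟨(b - 1) / 2, mem_range.2 (by omega), ?_⟩⟩
  simp only [if_pos hcommon]
  exact two_pos

namespace MajorizedBy

variable {x y : Multiset ℕ}

theorem totalGap_le (h : MajorizedBy x y) (z : Multiset ℕ) : totalGap x z ≤ totalGap y z := by
  rw [totalGap, totalGap, Multiset.sum_map_sum_map x, Multiset.sum_map_sum_map y]
  exact Multiset.sum_map_le_sum_map _ _ fun b _ =>
    h.sum_map_le_sum_map (secondDiff_balanceGap_nonneg b)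

theorem totalGap_lt (h : MajorizedBy x y) (hne : x ≠ y) : totalGap x x < totalGap y x := by
  obtain ⟨t, ht, b, hb, hbpos, hpar⟩ := h.exists_excess_lt_of_ne hne
  rw [totalGap, totalGap, Multiset.sum_map_sum_map x, Multiset.sum_map_sum_map y]
  exact Multiset.sum_lt_sum
    (fun c _ => h.sum_map_le_sum_map (secondDiff_balanceGap_nonneg c))
    ⟨b, hb, h.sum_map_lt_sum_map (secondDiff_balanceGap_nonneg b) ht
      (secondDiff_balanceGap_pos hbpos hpar)⟩

theorem totalGap_self_lt_totalGap_self (h : MajorizedBy x y) (hne : x ≠ y) :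
    totalGap x x < totalGap y y :=
  calc
    totalGap x x < totalGap y x := h.totalGap_lt hne
    _ = totalGap x y := totalGap_comm y x
    _ ≤ totalGap y y := h.totalGap_le y

end MajorizedBy
end BalanceGap

section WienerIndex

variable {V : Type*} (G : SimpleGraph V)

theorem sum_offDiag_dist (A : Finset V) :
    ∑ p ∈ A.offDiag, G.dist p.1 p.2 = ∑ u ∈ A, ∑ v ∈ A, G.dist u v := by
  classical
  rw [← sum_product', ← diag_union_offDiag A, sum_union (disjoint_diag_offDiag A), sum_diag,
    sum_eq_zero fun v _ => G.dist_self (v := v), zero_add]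

theorem even_sum_sum_dist (A : Finset V) : Even (∑ u ∈ A, ∑ v ∈ A, G.dist u v) := by
  classical
  induction A using Finset.induction_on with
  | empty => exact Even.zero
  | insert a A ha ih =>
    have hinsert : ∑ u ∈ insert a A, ∑ v ∈ insert a A, G.dist u v
        = (∑ v ∈ A, G.dist a v + ∑ v ∈ A, G.dist a v) + ∑ u ∈ A, ∑ v ∈ A, G.dist u v := by
      simp only [sum_insert ha, sum_add_distrib, dist_self, zero_add, G.dist_comm (v := a),
        add_assoc]
    rw [hinsert]
    exact (Even.add_self _).add ih

variable [Fintype V]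

theorem colorType_comp_equiv {U : Type*} [Fintype U] {k : ℕ} (f : V → Fin k) (e : U ≃ V) :
    colorType (f ∘ e) = colorType f := by
  refine Multiset.map_congr rfl fun i _ => ?_
  refine card_equiv e fun v => ?_
  simp only [colorClass, mem_filter_univ, Function.comp_apply]

variable [DecidableEq V]

theorem two_mul_wienerSet (A : Finset V) :
    2 * wienerSet G A = ∑ u ∈ A, ∑ v ∈ A, G.dist u v := by
  rw [wienerSet, sum_offDiag_dist, Nat.two_mul_div_two_of_even (even_sum_sum_dist G A)]

theorem two_mul_wienerColoring {k : ℕ} (f : V → Fin k) :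
    2 * wienerColoring G f = ∑ u, ∑ v, if f u = f v then G.dist u v else 0 := by
  rw [wienerColoring, mul_sum, ← sum_fiberwise univ f]
  refine sum_congr rfl fun i _ => ?_
  rw [two_mul_wienerSet]
  refine sum_congr rfl fun u hu => ?_
  rw [colorClass, sum_filter, (mem_filter.1 hu).2]
  simp only [eq_comm]

theorem two_mul_wienerColoring_swapColors {k : ℕ} (f : V → Fin k) (p q : V) :
    2 * wienerColoring G (swapColors f p q)
      = ∑ u, ∑ v, if f u = f v then G.dist (Equiv.swap p q u) (Equiv.swap p q v) else 0 := by
  rw [two_mul_wienerColoring, ← Equiv.sum_comp (Equiv.swap p q)]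
  refine sum_congr rfl fun u _ => ?_
  rw [← Equiv.sum_comp (Equiv.swap p q)]
  simp only [swapColors, Function.comp_apply, Equiv.swap_apply_self]

theorem IsWeakMaximizer.isLocalWeakMaximizer {k : ℕ} {f : V → Fin k}
    (hf : IsWeakMaximizer G f) : IsLocalWeakMaximizer G f :=
  ⟨hf.1, fun u v _ => hf.2 _ (hf.1.comp (Equiv.swap u v).surjective)
    (colorType_comp_equiv f (Equiv.swap u v))⟩

end WienerIndex

section PathGraph

variable {n : ℕ}

theorem pathGraph_abs_sub_le_length {u v : Fin n} (p : (pathGraph n).Walk u v) :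
    |(u : ℤ) - v| ≤ p.length := by
  induction p with
  | nil => simp
  | cons h p ih =>
    rw [pathGraph_adj] at h
    rw [Walk.length_cons, Nat.cast_succ]
    rw [abs_le] at ih ⊢
    omega

theorem pathGraph_dist_le_sub {u v : Fin n} (huv : u ≤ v) : (pathGraph n).dist u v ≤ v - u := by
  obtain ⟨v, hv⟩ := v
  induction v with
  | zero =>
    obtain rfl : u = ⟨0, hv⟩ := Fin.ext (Nat.le_zero.1 huv)
    simp
  | succ v ih =>
    rcases huv.eq_or_lt with rfl | hlt
    · simp
    · have huv' : (u : ℕ) ≤ v := Nat.lt_succ_iff.1 hlt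
      have hadj : (pathGraph n).Adj ⟨v, by omega⟩ ⟨v + 1, hv⟩ := pathGraph_adj.2 (Or.inl rfl)
      have htri := (pathGraph_preconnected n u ⟨v, by omega⟩).dist_triangle_left ⟨v + 1, hv⟩
      rw [dist_eq_one_iff_adj.2 hadj] at htri
      have := ih (by omega) huv'
      simp only at this ⊢
      omega

theorem pathGraph_dist (u v : Fin n) : ((pathGraph n).dist u v : ℤ) = |(u : ℤ) - v| := by
  refine le_antisymm ?_ ?_
  · wlog huv : u ≤ v generalizing u v
    · rw [SimpleGraph.dist_comm, abs_sub_comm]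
      exact this v u (le_of_not_ge huv)
    have := pathGraph_dist_le_sub huv
    rw [abs_sub_comm]
    exact le_trans (by omega) (le_abs_self _)
  · obtain ⟨p, hp⟩ := (pathGraph_preconnected n u v).exists_walk_length_eq_dist
    rw [← hp]
    exact pathGraph_abs_sub_le_length p

end PathGraph

section SideBalance

theorem sum_mul_sub_of_antisymm {ι R : Type*} [Fintype ι] [CommRing R] {s : ι → ι → R}
    (hs : ∀ u v, s v u = -s u v) (g : ι → R) :
    ∑ u, ∑ v, s u v * (g u - g v) = 2 * ∑ u, g u * ∑ v, s u v := by
  have hswap : ∑ u, ∑ v, s u v * g v = -∑ u, ∑ v, s u v * g u := by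
    rw [sum_comm, ← sum_neg_distrib]
    simp only [← sum_neg_distrib, ← neg_mul, ← hs]
  simp only [mul_sub, sum_sub_distrib]
  rw [hswap, sub_neg_eq_add, ← two_mul]
  simp only [mul_sum, mul_comm]

theorem sign_mul_le_abs (a x : ℤ) : Int.sign a * x ≤ |x| := by
  rcases lt_trichotomy a 0 with h | rfl | h
  · rw [Int.sign_eq_neg_one_of_neg h, neg_one_mul]
    exact neg_le_abs x
  · simp
  · rw [Int.sign_eq_one_of_pos h, one_mul]
    exact le_abs_self x

theorem sign_mul_eq_abs {a x : ℤ} (hpos : 0 ≤ a → 0 ≤ x) (hneg : a ≤ 0 → x ≤ 0) :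
    Int.sign a * x = |x| := by
  rcases lt_trichotomy a 0 with h | rfl | h
  · rw [Int.sign_eq_neg_one_of_neg h, neg_one_mul, abs_of_nonpos (hneg h.le)]
  · rw [le_antisymm (hneg le_rfl) (hpos le_rfl), mul_zero, abs_zero]
  · rw [Int.sign_eq_one_of_pos h, one_mul, abs_of_nonneg (hpos h.le)]

variable {n k : ℕ}

theorem sum_sign_sub (u : Fin n) : ∑ v : Fin n, Int.sign ((v : ℤ) - u) = n - 1 - 2 * u := by
  have hsign (v : Fin n) : Int.sign ((v : ℤ) - u)
      = (if v ∈ Ioi u then 1 else 0) - (if v ∈ Iio u then 1 else 0) := by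
    simp only [mem_Ioi, mem_Iio]
    grind
  simp only [hsign, sum_sub_distrib, sum_ite_mem, univ_inter, sum_const, Fin.card_Ioi, Fin.card_Iio]
  grind

/-- The number of vertices of the color of `u` to the right of `u`, minus the number of those to
the left. -/
def sideBalance (f : Fin n → Fin k) (u : Fin n) : ℤ := rightCount f u - leftCount f u

theorem sideBalance_eq_sum_sign (f : Fin n → Fin k) (u : Fin n) :
    sideBalance f u = ∑ v, if f u = f v then Int.sign ((v : ℤ) - u) else 0 := by
  rw [sideBalance, rightCount, leftCount, card_filter, card_filter, Nat.cast_sum, Nat.cast_sum,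
    ← sum_sub_distrib]
  refine sum_congr rfl fun v _ => ?_
  grind

theorem card_colorClass_apply (f : Fin n → Fin k) (u : Fin n) :
    (colorClass f (f u)).card = leftCount f u + rightCount f u + 1 := by
  have hself : ∑ v, (if v = u then 1 else 0) = 1 := by simp only [sum_ite_eq', mem_univ, if_true]
  rw [colorClass, leftCount, rightCount, card_filter, card_filter, card_filter, ← hself,
    ← sum_add_distrib, ← sum_add_distrib]
  refine sum_congr rfl fun v _ => ?_
  grind

theorem sideBalance_eq_card_colorClass (f : Fin n → Fin k) (u : Fin n) :
    sideBalance f u = (colorClass f (f u)).card - 1 - 2 * leftCount f u := by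
  rw [sideBalance, card_colorClass_apply]
  push_cast
  ring

theorem sum_abs_sub_eq_sideBalance (f : Fin n → Fin k) {g : Fin n → ℤ}
    (hg : ∀ u v, f u = f v → u ≤ v → g u ≤ g v) :
    ∑ u, ∑ v, (if f u = f v then |g u - g v| else 0) = -2 * ∑ u, g u * sideBalance f u := by
  have hanti (u v : Fin n) : (if f v = f u then Int.sign ((u : ℤ) - v) else 0)
      = -(if f u = f v then Int.sign ((v : ℤ) - u) else 0) := by
    grind
  simp only [sideBalance_eq_sum_sign]
  rw [neg_mul, ← sum_mul_sub_of_antisymm hanti, ← sum_neg_distrib]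
  refine sum_congr rfl fun u _ => ?_
  rw [← sum_neg_distrib]
  refine sum_congr rfl fun v _ => ?_
  split_ifs with huv
  · have hpos : 0 ≤ (v : ℤ) - u → 0 ≤ g v - g u := fun h =>
      sub_nonneg.2 (hg u v huv (by rw [Fin.le_def]; omega))
    have hneg : (v : ℤ) - u ≤ 0 → g v - g u ≤ 0 := fun h =>
      sub_nonpos.2 (hg v u huv.symm (by rw [Fin.le_def]; omega))
    rw [abs_sub_comm, ← sign_mul_eq_abs hpos hneg]
    ring
  · rw [zero_mul, neg_zero]

theorem sum_sideBalance (f : Fin n → Fin k) : ∑ u, sideBalance f u = 0 := by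
  have h := sum_abs_sub_eq_sideBalance f (g := fun _ => 1) fun _ _ _ _ => le_rfl
  simpa using h

theorem wienerColoring_pathGraph (f : Fin n → Fin k) :
    (wienerColoring (pathGraph n) f : ℤ) = -∑ u : Fin n, (u : ℤ) * sideBalance f u := by
  have htwo : 2 * (wienerColoring (pathGraph n) f : ℤ)
      = ∑ u, ∑ v, if f u = f v then |(u : ℤ) - v| else 0 := by
    simp only [← pathGraph_dist]
    exact_mod_cast two_mul_wienerColoring (pathGraph n) f
  rw [sum_abs_sub_eq_sideBalance f fun u v _ huv => Int.ofNat_le.2 huv] at htwo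
  linarith

theorem four_mul_wienerColoring (f : Fin n → Fin k) :
    4 * (wienerColoring (pathGraph n) f : ℤ)
      = ∑ u : Fin n, ∑ v : Fin n,
          Int.sign ((v : ℤ) - u) * (sideBalance f u - sideBalance f v) := by
  have hanti (u v : Fin n) : Int.sign ((u : ℤ) - v) = -Int.sign ((v : ℤ) - u) := by grind
  have hlinear : ∑ u : Fin n, sideBalance f u * ((n : ℤ) - 1 - 2 * u)
      = (n - 1) * ∑ u, sideBalance f u - 2 * ∑ u : Fin n, (u : ℤ) * sideBalance f u := by
    rw [mul_sum, mul_sum, ← sum_sub_distrib]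
    exact sum_congr rfl fun u _ => by ring
  rw [sum_mul_sub_of_antisymm hanti]
  simp only [sum_sign_sub]
  rw [hlinear, sum_sideBalance, wienerColoring_pathGraph]
  ring

theorem four_mul_wienerColoring_le (f : Fin n → Fin k) :
    4 * (wienerColoring (pathGraph n) f : ℤ)
      ≤ ∑ u, ∑ v, |sideBalance f u - sideBalance f v| := by
  rw [four_mul_wienerColoring]
  exact sum_le_sum fun u _ => sum_le_sum fun v _ => sign_mul_le_abs _ _

theorem four_mul_wienerColoring_of_antitone {f : Fin n → Fin k} (hf : Antitone (sideBalance f)) :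
    4 * (wienerColoring (pathGraph n) f : ℤ)
      = ∑ u, ∑ v, |sideBalance f u - sideBalance f v| := by
  rw [four_mul_wienerColoring]
  refine sum_congr rfl fun u _ => sum_congr rfl fun v _ => sign_mul_eq_abs (fun h => ?_) fun h => ?_
  · exact sub_nonneg.2 (hf (by rw [Fin.le_def]; omega))
  · exact sub_nonpos.2 (hf (by rw [Fin.le_def]; omega))

end SideBalance

section LocalMaximizer

theorem swap_lt_swap_of_covBy {α : Type*} [LinearOrder α] {p q u v : α} (hpq : p ⋖ q)
    (huv : u < v) (hne : ¬(u = p ∧ v = q)) : Equiv.swap p q u < Equiv.swap p q v := by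
  have hlt := hpq.lt
  have hge {w : α} (hw : p < w) : q ≤ w := hpq.ge_of_gt hw
  have hle {w : α} (hw : w < q) : w ≤ p := hpq.le_of_lt hw
  simp only [Equiv.swap_apply_def]
  grind

theorem sum_apply_swap_mul {ι R : Type*} [Fintype ι] [DecidableEq ι] [CommRing R] (p q : ι)
    (g F : ι → R) :
    ∑ u, g (Equiv.swap p q u) * F u = ∑ u, g u * F u + (g q - g p) * (F p - F q) := by
  have hterm (u : ι) : g (Equiv.swap p q u) * F u = g u * F u
      + ((if u = p then (g q - g p) * F p else 0) - if u = q then (g q - g p) * F q else 0) := by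
    rw [Equiv.swap_apply_def]
    grind
  simp only [hterm, sum_add_distrib, sum_sub_distrib, sum_ite_eq', mem_univ, if_true, mul_sub]

variable {n k : ℕ}

theorem wienerColoring_swapColors (f : Fin n → Fin k) {p q : Fin n} (hpq : p ⋖ q)
    (hf : f p ≠ f q) :
    (wienerColoring (pathGraph n) (swapColors f p q) : ℤ)
      = wienerColoring (pathGraph n) f + sideBalance f q - sideBalance f p := by
  have hmono (u v : Fin n) (huv : f u = f v) (hle : u ≤ v) :
      ((Equiv.swap p q u : Fin n) : ℤ) ≤ (Equiv.swap p q v : Fin n) := by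
    rcases hle.eq_or_lt with rfl | hlt
    · exact le_rfl
    · have := swap_lt_swap_of_covBy hpq hlt (by rintro ⟨rfl, rfl⟩; exact hf huv)
      exact Int.ofNat_le.2 this.le
  have htwo : 2 * (wienerColoring (pathGraph n) (swapColors f p q) : ℤ)
      = ∑ u, ∑ v, if f u = f v then
          |((Equiv.swap p q u : Fin n) : ℤ) - (Equiv.swap p q v : Fin n)| else 0 := by
    simp only [← pathGraph_dist]
    exact_mod_cast two_mul_wienerColoring_swapColors (pathGraph n) f p q
  have hsucc : ((q : ℕ) : ℤ) - (p : ℕ) = 1 := by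
    have := Nat.covBy_iff_add_one_eq.1 (Fin.covBy_iff.1 hpq)
    omega
  rw [sum_abs_sub_eq_sideBalance f hmono, sum_apply_swap_mul p q (fun u : Fin n => (u : ℤ)), hsucc]
    at htwo
  rw [wienerColoring_pathGraph f]
  linarith

theorem leftCount_mono {f : Fin n → Fin k} {u v : Fin n} (hf : f u = f v) (huv : u ≤ v) :
    leftCount f u ≤ leftCount f v := by
  rw [leftCount, leftCount, hf]
  exact card_le_card (monotone_filter_right _ fun w _ hw => ⟨hw.1.trans_le huv, hw.2⟩)

theorem IsLocalWeakMaximizer.antitone_sideBalance {f : Fin n → Fin k}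
    (hf : IsLocalWeakMaximizer (pathGraph n) f) : Antitone (sideBalance f) := by
  rw [antitone_iff_forall_covBy]
  intro p q hpq
  by_cases hc : f p = f q
  · rw [sideBalance_eq_card_colorClass, sideBalance_eq_card_colorClass, hc]
    have := leftCount_mono hc hpq.le
    omega
  · have hle := hf.2 p q (Or.inl hpq)
    have hswap := wienerColoring_swapColors f hpq hc
    omega

end LocalMaximizer

section ColorType

theorem sum_card_filter_lt {α M : Type*} [LinearOrder α] [AddCommMonoid M] (A : Finset α)
    (F : ℕ → M) : ∑ u ∈ A, F (A.filter (· < u)).card = ∑ l ∈ range A.card, F l := by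
  induction A using Finset.induction_on_max with
  | empty => simp
  | insert a s ha ih =>
    have has : a ∉ s := fun h => lt_irrefl _ (ha a h)
    rw [sum_insert has, card_insert_of_notMem has, sum_range_succ, ← ih, add_comm, filter_insert,
      if_neg (lt_irrefl a), filter_true_of_mem ha]
    refine congrArg (· + _) (sum_congr rfl fun u hu => ?_)
    rw [filter_insert, if_neg (ha u hu).not_gt]

variable {n k : ℕ}

theorem sum_comp_sideBalance {M : Type*} [AddCommMonoid M] (f : Fin n → Fin k) (F : ℤ → M) :
    ∑ u, F (sideBalance f u) = ((colorType f).map (balanceSum F)).sum := by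
  have hclass (i : Fin k) : ∑ u with f u = i, F (sideBalance f u)
      = balanceSum F (colorClass f i).card := by
    rw [balanceSum, ← sum_card_filter_lt]
    refine sum_congr rfl fun u hu => ?_
    obtain rfl : f u = i := (mem_filter.1 hu).2
    rw [sideBalance_eq_card_colorClass, leftCount]
    simp only [colorClass, filter_filter, and_comm]
  rw [← sum_fiberwise univ f, sum_congr rfl fun i _ => hclass i, colorType, Multiset.map_map]
  rfl

theorem sum_abs_sideBalance_sub (f : Fin n → Fin k) :
    ∑ u, ∑ v, |sideBalance f u - sideBalance f v| = totalGap (colorType f) (colorType f) := by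
  have hinner (p : ℤ) := sum_comp_sideBalance f fun q => |p - q|
  simp only [hinner]
  rw [sum_comp_sideBalance f fun p => ((colorType f).map (balanceSum fun q => |p - q|)).sum]
  simp only [totalGap, balanceGap, balanceSum, Multiset.sum_map_sum]
  rfl

end ColorType

theorem path_majorization_strict_general (n k : ℕ) (f f' : Fin n → Fin k)
    (hf' : IsLocalWeakMaximizer (pathGraph n) f')
    (hmaj : MajorizedBy (colorType f) (colorType f')) (hne : colorType f ≠ colorType f') :
    wienerColoring (pathGraph n) f < wienerColoring (pathGraph n) f' := by
  have hgap := hmaj.totalGap_self_lt_totalGap_self hne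
  have hle := four_mul_wienerColoring_le f
  have heq := four_mul_wienerColoring_of_antitone hf'.antitone_sideBalance
  rw [sum_abs_sideBalance_sub] at hle heq
  omega

/-- If `f, f'` are `k`-color weak maximizers of `W` on `P_n`, `type(f) ≺ type(f')` and
`type(f) ≠ type(f')`, then `W(f) < W(f')`. -/
theorem path_majorization_strict (n k : ℕ) (f f' : Fin n → Fin k)
    (hf : IsWeakMaximizer (SimpleGraph.pathGraph n) f)
    (hf' : IsWeakMaximizer (SimpleGraph.pathGraph n) f')
    (hmaj : MajorizedBy (colorType f) (colorType f'))
    (hne : colorType f ≠ colorType f') :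
    wienerColoring (SimpleGraph.pathGraph n) f
      < wienerColoring (SimpleGraph.pathGraph n) f' := by
  exact path_majorization_strict_general n k f f' hf'.isLocalWeakMaximizer hmaj hne
end
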